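/- Let S be a normal integral k-scheme and U ⊆ S a nonempty open subscheme with inclusion i : U → S. Let V' and V be S-schemes, π : V' → V a finite S-morphism, h : S → V a section, and h' : U → V' a section such that π ∘ h' = h ∘ i. Then h' extends in a unique way to a section S → V' lifting h. -/

import Mathlib

/-!
Let `K` be the function field of `S` and `f : Spec K ⟶ S` its generic point. Since `S` is normal,
it coincides with its relative normalization in `Spec K` (`isIso_fromNormalization`): on an affine
open `W`, `Γ(S, W)` is integrally closed in its fraction field `K`. The generic point lies in `U`,
so `h'` restricts to a `K`-point of `V'`, and with `f` it gives a `K`-point of the fibre product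
`V' ×_V S`, which is finite, hence integral, over `S`. The universal property of the relative
normalization extends this `K`-point to a section of `V' ×_V S` over `S`, that is, to a lift
`H : S ⟶ V'` of `h`.

Both `U.ι ≫ H = h'` and the uniqueness of `H` hold because two lifts along the separated morphism
`π` which agree at the generic point of a reduced irreducible source are equal.
-/

open AlgebraicGeometry CategoryTheory
open Limits

universe u

/-- Integral closedness is a local property: the localizations of `Γ(S, W)` at its primes are
stalks of `S`. -/
lemma isIntegrallyClosed_sections {S : Scheme.{u}} [IsIntegral S]
    (hnormal : ∀ x : S, IsIntegrallyClosed (S.presheaf.stalk x))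
    {W : S.Opens} (hW : IsAffineOpen W) [Nonempty W] :
    IsIntegrallyClosed Γ(S, W) := by
  refine IsIntegrallyClosed.of_localization_maximal fun P _ hP ↦ ?_
  let x : PrimeSpectrum Γ(S, W) := ⟨P, hP.isPrime⟩
  have hx : hW.fromSpec x ∈ W := (hW.isoSpec.inv x).2
  let := TopCat.Presheaf.algebra_section_stalk S.presheaf ⟨hW.fromSpec x, hx⟩
  have : IsLocalization.AtPrime (S.presheaf.stalk (hW.fromSpec x)) P :=
    hW.isLocalization_stalk' x hx
  have := hnormal (hW.fromSpec x)
  exact .of_equiv (IsLocalization.algEquiv P.primeCompl (S.presheaf.stalk (hW.fromSpec x))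
    (Localization.AtPrime P)).toRingEquiv

/-- The preimage of a nonempty affine open `W` under `Spec K(S) ⟶ S` is all of `Spec K(S)`, so
its ring of sections is `K(S) = Frac Γ(S, W)`. -/
lemma isFractionRing_app_fromSpecStalk {S : Scheme.{u}} [IsIntegral S]
    {W : S.Opens} (hW : IsAffineOpen W) [Nonempty W] :
    letI := ((S.fromSpecStalk (genericPoint S)).app W).hom.toAlgebra
    IsFractionRing Γ(S, W) Γ(Spec (S.presheaf.stalk (genericPoint S)),
      S.fromSpecStalk (genericPoint S) ⁻¹ᵁ W) := by
  have hη : genericPoint S ∈ W :=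
    ((genericPoint_spec S).mem_open_set_iff W.isOpen).mpr (by simpa using ‹Nonempty W›)
  have htop : S.fromSpecStalk (genericPoint S) ⁻¹ᵁ W = ⊤ := by
    refine top_unique fun x _ ↦ ?_
    have hx : S.fromSpecStalk (genericPoint S) x ⤳ genericPoint S :=
      Set.ext_iff.mp S.range_fromSpecStalk _ |>.mp ⟨x, rfl⟩
    exact hx.mem_open W.isOpen hη
  let := ((S.fromSpecStalk (genericPoint S)).app W).hom.toAlgebra
  have hiso : IsIso ((Spec (S.presheaf.stalk (genericPoint S))).presheaf.map
      (homOfLE (le_top : S.fromSpecStalk (genericPoint S) ⁻¹ᵁ W ≤ ⊤)).op) := by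
    have : IsIso (homOfLE (le_top : S.fromSpecStalk (genericPoint S) ⁻¹ᵁ W ≤ ⊤)) :=
      ⟨homOfLE htop.ge, rfl, rfl⟩
    infer_instance
  let e := (asIso ((Scheme.ΓSpecIso (S.presheaf.stalk (genericPoint S))).inv ≫
    (Spec (S.presheaf.stalk (genericPoint S))).presheaf.map
      (homOfLE (le_top : S.fromSpecStalk (genericPoint S) ⁻¹ᵁ W ≤ ⊤)).op)).commRingCatIsoToRingEquiv
  have := functionField_isFractionRing_of_isAffineOpen S W hW
  refine IsLocalization.isLocalization_of_algEquiv (S := S.functionField) _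
    (AlgEquiv.ofRingEquiv (f := e) fun x ↦ ?_)
  exact congr($(Scheme.fromSpecStalk_app hη) x).symm

set_option synthInstance.maxHeartbeats 200000 in
/-- The spectrum of the field `K(S)` is a noetherian space, so every morphism from it is
quasi-compact. -/
instance quasiCompact_fromSpecStalk_genericPoint (S : Scheme.{u}) [IsIntegral S] :
    QuasiCompact (S.fromSpecStalk (genericPoint S)) :=
  quasiCompact_of_noetherianSpace_source _

lemma isIso_of_isAffineHom_of_isIso_app {X Y : Scheme.{u}} (g : X ⟶ Y) [IsAffineHom g]
    (hg : ∀ W : Y.Opens, IsAffineOpen W → IsIso (g.app W)) : IsIso g := by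
  refine (IsZariskiLocalAtTarget.iff_of_iSup_eq_top (P := .isomorphisms Scheme.{u})
    (fun W : Y.affineOpens ↦ W.1) (iSup_affineOpens_eq_top Y)).mpr fun W ↦ ?_
  have : IsAffine W.1 := W.2
  have : IsAffine (g ⁻¹ᵁ W.1) := W.2.preimage g
  have : IsIso (g ∣_ W.1).appTop := by
    rw [morphismRestrict_appTop]
    have := hg (W.1.ι ''ᵁ ⊤) (by rw [Scheme.Opens.ι_image_top]; exact W.2)
    exact IsIso.comp_isIso' this
      (X.presheaf.mapIso (eqToIso (image_morphismRestrict_preimage g W.1 ⊤)).op).isIso_hom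
  exact ((MorphismProperty.isomorphisms Scheme.{u}).arrow_mk_iso_iff
    (arrowIsoSpecΓOfIsAffine (g ∣_ W.1))).mpr
      (inferInstanceAs (IsIso (Spec.map (g ∣_ W.1).appTop)))

/-- A normal integral scheme is its own relative normalization in its generic point: over an
affine open `W`, the integral closure of `Γ(S, W)` in its fraction field is `Γ(S, W)`. -/
lemma isIso_fromNormalization {S : Scheme.{u}} [IsIntegral S]
    (hnormal : ∀ x : S, IsIntegrallyClosed (S.presheaf.stalk x)) :
    IsIso (S.fromSpecStalk (genericPoint S)).fromNormalization := by
  set f := S.fromSpecStalk (genericPoint S) with hf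
  have key (W : S.Opens) (hW : IsAffineOpen W) : IsIso (f.fromNormalization.app W) := by
    rw [ConcreteCategory.isIso_iff_bijective]
    rcases isEmpty_or_nonempty W with hW0 | hW0
    -- Over the empty open set both section rings are zero.
    · obtain rfl : W = ⊥ := by
        ext x; simpa using fun hx ↦ hW0.false ⟨x, hx⟩
      have h2 : Subsingleton Γ(S, ⊥) := inferInstance
      have h3 : Subsingleton Γ(f.normalization, f.fromNormalization ⁻¹ᵁ ⊥) :=
        RingHom.codomain_trivial (f.fromNormalization.app ⊥).hom
      exact ⟨fun _ _ _ ↦ Subsingleton.elim _ _, fun _ ↦ ⟨0, Subsingleton.elim _ _⟩⟩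
    · let := (f.app W).hom.toAlgebra
      have := isIntegrallyClosed_sections hnormal hW
      have : IsFractionRing Γ(S, W) Γ(Spec (S.presheaf.stalk (genericPoint S)), f ⁻¹ᵁ W) := isFractionRing_app_fromSpecStalk hW
      rw [← ConcreteCategory.isIso_iff_bijective, f.fromNormalization_app hW]
      have : IsIso (CommRingCat.ofHom
          (algebraMap Γ(S, W) (integralClosure Γ(S, W) Γ(Spec (S.presheaf.stalk (genericPoint S)), f ⁻¹ᵁ W)))) := by
        rw [ConcreteCategory.isIso_iff_bijective]
        refine ⟨fun a b hab ↦ IsFractionRing.injective Γ(S, W) Γ(Spec (S.presheaf.stalk (genericPoint S)), f ⁻¹ᵁ W)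
          congr(Subtype.val $hab), fun x ↦ ?_⟩
        obtain ⟨y, hy⟩ := IsIntegrallyClosed.isIntegral_iff.mp x.2
        exact ⟨y, Subtype.ext hy⟩
      infer_instance
  exact isIso_of_isAffineHom_of_isIso_app _ key

/-- **Lemma (Chaudouard–Laumon, lemme 3.8, after Ngô).**  Let `S` be a normal integral
`k`-scheme (normality being expressed by the integral closedness of all local rings of `S`)
and `U ⊆ S` a nonempty open subscheme with inclusion `i = U.ι : U → S`.  Let `V'` and `V`
be `S`-schemes with structural morphisms `p' : V' → S` and `p : V → S`, and let
`π : V' → V` be a *finite* `S`-morphism.  Let `h : S → V` be a section of `p` and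
`h' : U → V'` a section of `p'` over `U` with `π ∘ h' = h ∘ i`.  Then `h'` extends in a
unique way to a section `H : S → V'` lifting `h`. -/
theorem section_extends_uniquely_through_finite
    (S : Scheme) [IsIntegral S]
    (hnormal : ∀ x : S, IsIntegrallyClosed (S.presheaf.stalk x))
    (U : S.Opens) (hU : Nonempty U)
    (V' V : Scheme) (p' : V' ⟶ S) (p : V ⟶ S)
    (π : V' ⟶ V) [IsFinite π] (hπ : π ≫ p = p')
    (h : S ⟶ V) (hsec : h ≫ p = 𝟙 S)
    (h' : (U : Scheme) ⟶ V') (hsec' : h' ≫ p' = U.ι)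
    (hcompat : h' ≫ π = U.ι ≫ h) :
    ∃! H : S ⟶ V', H ≫ π = h ∧ U.ι ≫ H = h' := by
  have hη : genericPoint S ∈ U :=
    ((genericPoint_spec S).mem_open_set_iff U.isOpen).mpr (by simpa using hU)
  let f := S.fromSpecStalk (genericPoint S)
  let g := U.fromSpecStalkOfMem (genericPoint S) hη
  have hg : g ≫ U.ι = f := U.fromSpecStalkOfMem_ι _ hη
  have hf : IsDominant f := by
    refine ⟨dense_iff_closure_eq.mpr (Set.univ_subset_iff.mp ?_)⟩
    rw [← (genericPoint_spec S).def]
    refine closure_mono (Set.singleton_subset_iff.mpr ?_)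
    rw [S.range_fromSpecStalk]
    exact specializes_rfl
  have hgdom : IsDominant g := by
    have : IsDominant (g ≫ U.ι) := hg ▸ hf
    exact .of_comp_of_isOpenImmersion g U.ι
  have := isIso_fromNormalization hnormal
  have hfac : f = pullback.lift (g ≫ h') f (by simp [hcompat, reassoc_of% hg]) ≫
    pullback.snd π h := (pullback.lift_snd _ _ _).symm
  -- The base change of `π` along `h` is integral over `S`, so its given `K(S)`-point extends
  -- over the normalization of `S` in `Spec K(S)`, which is `S` itself.
  let D := f.normalizationDesc _ _ hfac
  let H : S ⟶ V' := inv f.fromNormalization ≫ D ≫ pullback.fst π h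
  have hHπ : H ≫ π = h := by
    simp [H, D, pullback.condition]
  have hfH : f ≫ H = g ≫ h' := by
    have : f ≫ inv f.fromNormalization = f.toNormalization := by
      rw [IsIso.comp_inv_eq, f.toNormalization_fromNormalization]
    simp only [H, D, reassoc_of% this, Scheme.Hom.toNormalization_normalizationDesc_assoc]
    exact pullback.lift_fst _ _ _
  refine ⟨H, ⟨hHπ, ?_⟩, fun H₂ ⟨h₁, h₂⟩ ↦ ?_⟩
  · exact ext_of_isDominant_of_isSeparated π (by simp [hHπ, hcompat]) g
      (by rw [reassoc_of% hg, hfH])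
  · refine ext_of_isDominant_of_isSeparated π (by rw [h₁, hHπ]) f ?_
    rw [hfH, ← h₂, reassoc_of% hg]
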